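/- Let k ≥ 3 and d be positive reals with d < 2(k−1)log(k−1), and set d_{k−1} = 2(k−1)log(k−1). For a k×k doubly stochastic matrix M = [m_{pq}], define φ(M) = −(1/k)∑_{p,q} m_{pq} log m_{pq} + (d/2) log(1 − 2/k + (1/k²)∑_{p,q} m_{pq}²). Then φ(M) ≤ log k + d·log(1 − 1/k) − ((d_{k−1} − d)/(4(k−1)²)) · ∑_{p,q} (m_{pq} − 1/k)². -/

import Mathlib

open Finset

theorem aux_log_le {s : ℝ} (hs : 1 ≤ s) : Real.log s ≤ (s - s⁻¹) / 2 := by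
  rw [← Real.sinh_log (by linarith)]
  exact Real.self_le_sinh_iff.2 (Real.log_nonneg hs)

theorem aux_le_log {t : ℝ} (ht : 1 ≤ t) : 2 * (t - 1) ≤ (t + 1) * Real.log t := by
  have h := Real.le_log_one_add_of_nonneg (x := t - 1) (by linarith)
  rw [div_le_iff₀ (by linarith)] at h
  have e : 1 + (t - 1) = t := by ring
  rw [e] at h
  linarith

theorem aux_tangent_small {t : ℝ} (h0 : 0 ≤ t) (h1 : t ≤ 1) :
    (t - 1) ^ 2 / 2 ≤ t * Real.log t - t + 1 := by
  rcases h0.eq_or_lt with h | h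
  · subst h; norm_num
  · have := aux_log_le (s := t⁻¹) ((one_le_inv₀ h).2 h1)
    rw [Real.log_inv, inv_inv] at this
    have h2 := mul_le_mul_of_nonneg_left this h0
    have e : t * ((t⁻¹ - t) / 2) = (1 - t ^ 2) / 2 := by field_simp
    rw [e] at h2
    linarith

theorem aux_poly {n t : ℝ} (h1 : 1 ≤ t) (h2 : t ≤ n) :
    (n + 1) * (4 * n * t * (t - 1) + (t + 1) * (n ^ 2 - t ^ 2)) ≤ 2 * n ^ 2 * t * (n + t) := by
  obtain ⟨a, rfl⟩ : ∃ a, t = 1 + a := ⟨t - 1, by ring⟩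
  obtain ⟨b, rfl⟩ : ∃ b, n = 1 + a + b := ⟨n - (1 + a), by ring⟩
  have ha : 0 ≤ a := by linarith
  have hb : 0 ≤ b := by linarith
  have : 0 ≤ a * b := by positivity
  have : 0 ≤ a * b ^ 2 := by positivity
  have : 0 ≤ a * b ^ 3 := by positivity
  have : 0 ≤ a ^ 2 * b ^ 2 := by positivity
  have : 0 ≤ a ^ 2 * b := by positivity
  have : 0 ≤ a ^ 2 := by positivity
  have : 0 ≤ b ^ 2 := by positivity
  nlinarith

theorem aux_tangent_large {n t : ℝ} (h1 : 1 ≤ t) (h2 : t ≤ n) :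
    (n + 1) / n * Real.log n * (t - 1) ^ 2 ≤ (n + t) * (t * Real.log t - t + 1) := by
  have hn : 0 < n := by linarith
  have ht : 0 < t := by linarith
  have hP := aux_poly h1 h2
  have hl := aux_le_log h1
  have hs := aux_log_le (s := n / t) ((one_le_div ht).2 h2)
  rw [Real.log_div hn.ne' ht.ne', inv_div] at hs
  set l := Real.log t
  have hL : Real.log n ≤ l + (n / t - t / n) / 2 := by linarith
  have hl2 : 2 * (t - 1) / (t + 1) ≤ l := by
    rw [div_le_iff₀ (by linarith)]; linarith
  have hc : 0 ≤ (n + t) * t - (n + 1) / n * (t - 1) ^ 2 := by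
    have : (n + 1) / n ≤ 2 := by rw [div_le_iff₀ hn]; linarith
    nlinarith [mul_le_mul_of_nonneg_right this (sq_nonneg (t - 1))]
  have hk : 0 ≤ (n + 1) / n * (t - 1) ^ 2 := by positivity
  have s1 := mul_le_mul_of_nonneg_left hL hk
  have s2 := mul_le_mul_of_nonneg_left hl2 hc
  have key : 0 ≤ ((n + t) * t - (n + 1) / n * (t - 1) ^ 2) * (2 * (t - 1) / (t + 1))
      - (n + t) * (t - 1) - (n + 1) / n * (t - 1) ^ 2 * ((n / t - t / n) / 2) := by
    have e : ((n + t) * t - (n + 1) / n * (t - 1) ^ 2) * (2 * (t - 1) / (t + 1))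
      - (n + t) * (t - 1) - (n + 1) / n * (t - 1) ^ 2 * ((n / t - t / n) / 2)
      = (t - 1) ^ 2 * (2 * n ^ 2 * t * (n + t) -
        (n + 1) * (4 * n * t * (t - 1) + (t + 1) * (n ^ 2 - t ^ 2))) / (2 * n ^ 2 * t * (t + 1)) := by
      field_simp
      ring
    rw [e]
    apply div_nonneg (mul_nonneg (sq_nonneg _) (by linarith)) (by positivity)
  linarith

theorem aux_tangent {n q y : ℝ} (hn : 2 ≤ n) (hq : 0 ≤ q) (hy : 0 ≤ y) (hy1 : (n + 1) * y ≤ 1)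
    (hqy : q ≤ n * y) (hqy1 : q + n * y ≤ 1) :
    (n + 1) / n * Real.log n * (q - y) ^ 2 ≤ q * Real.log q - q * Real.log y - q + y := by
  have hn0 : 0 < n := by linarith
  rcases hy.eq_or_lt with h | h
  · subst h
    have : q = 0 := by linarith
    subst this
    simp
  obtain ⟨t, rfl⟩ : ∃ t, q = t * y := ⟨q / y, by field_simp⟩
  have ht0 : 0 ≤ t := by
    by_contra hh
    nlinarith [mul_pos (neg_pos.2 (not_le.1 hh)) h]
  have htn : t ≤ n := le_of_mul_le_mul_right hqy h
  have e : t * y * Real.log (t * y) - t * y * Real.log y - t * y + y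
      = y * (t * Real.log t - t + 1) := by
    rcases ht0.eq_or_lt with h' | h'
    · subst h'; simp
    · rw [Real.log_mul h'.ne' h.ne']; ring
  rw [e]
  have e2 : (t * y - y) ^ 2 = y * (y * (t - 1) ^ 2) := by ring
  rw [e2, mul_left_comm]
  apply mul_le_mul_of_nonneg_left _ hy
  rcases le_total t 1 with h1 | h1
  · refine le_trans ?_ (aux_tangent_small ht0 h1)
    have hL : Real.log n ≤ n / 2 := by
      have := Real.log_le_sub_one_of_pos (x := n / 2) (by linarith)
      rw [Real.log_div hn0.ne' (by norm_num)] at this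
      linarith [Real.log_two_lt_d9]
    have hC : (n + 1) / n * Real.log n ≤ (n + 1) / 2 := by
      calc _ ≤ (n + 1) / n * (n / 2) := by gcongr
        _ = _ := by field_simp
    have := mul_le_mul_of_nonneg_right hC (mul_nonneg hy (sq_nonneg (t - 1)))
    nlinarith [mul_le_mul_of_nonneg_right hy1 (sq_nonneg (t - 1))]
  · have h3 := aux_tangent_large h1 htn
    have h4 := mul_le_mul_of_nonneg_left h3 hy
    have h5 : 0 ≤ t * Real.log t - t + 1 :=
      by
        have := Real.one_sub_inv_le_log_of_pos (x := t) (by linarith)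
        have h6 := mul_le_mul_of_nonneg_left this ht0
        have : t * (1 - t⁻¹) = t - 1 := by field_simp
        linarith
    have h6 : y * (n + t) ≤ 1 := by linarith
    nlinarith [mul_le_mul_of_nonneg_right h6 h5]

theorem aux_ratio {u v : ℝ} (hu : 0 ≤ u) (huv : u ≤ v) (hv : v < 1) :
    v * (Real.log (1 + u) - Real.log (1 - u)) ≤ u * (Real.log (1 + v) - Real.log (1 - v)) := by
  have hv0 : 0 ≤ v := hu.trans huv
  have a := (Real.hasSum_log_sub_log_of_abs_lt_one
    (x := u) (by rw [abs_of_nonneg hu]; linarith)).mul_left v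
  have b := (Real.hasSum_log_sub_log_of_abs_lt_one
    (x := v) (by rw [abs_of_nonneg hv0]; linarith)).mul_left u
  refine hasSum_le (fun i => ?_) a b
  have h := pow_le_pow_left₀ hu huv (2 * i)
  have h2 : v * u * u ^ (2 * i) ≤ v * u * v ^ (2 * i) := by gcongr
  have h3 : (0 : ℝ) ≤ 2 * (1 / (2 * (i : ℝ) + 1)) := by positivity
  have := mul_le_mul_of_nonneg_left h2 h3
  rw [pow_succ, pow_succ]
  linarith

/-- The sign of the derivative. -/
theorem aux_ratio' {x a : ℝ} (hx : 0 < x) (hxa : x ≤ a) (ha : a ≤ 1 / 2) :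
    (1 - 2 * x) * (Real.log (1 - a) - Real.log a) ≤
      (1 - 2 * a) * (Real.log (1 - x) - Real.log x) := by
  have h := aux_ratio (u := 1 - 2 * a) (v := 1 - 2 * x) (by linarith) (by linarith) (by linarith)
  have key : ∀ z : ℝ, 0 < z → z ≤ 1 / 2 → Real.log (1 + (1 - 2 * z)) - Real.log (1 - (1 - 2 * z))
      = Real.log (1 - z) - Real.log z := by
    intro z hz hz1
    have e1 : 1 + (1 - 2 * z) = 2 * (1 - z) := by ring
    have e2 : 1 - (1 - 2 * z) = 2 * z := by ring
    rw [e1, e2, Real.log_mul (by norm_num) (by linarith), Real.log_mul (by norm_num) hz.ne']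
    ring
  rwa [key a (by linarith) ha, key x hx (by linarith)] at h

theorem aux_bin_half {x a A : ℝ} (hx0 : 0 ≤ x) (hx1 : x ≤ 1 / 2) (ha : 0 < a) (ha1 : a < 1 / 2)
    (hA : A * (1 - 2 * a) = Real.log (1 - a) - Real.log a) :
    Real.binEntropy x - A * (x * (1 - x)) ≤ Real.binEntropy a - A * (a * (1 - a)) := by
  have hcont : Continuous (fun x : ℝ => Real.binEntropy x - A * (x * (1 - x))) := by fun_prop
  have hder : ∀ x : ℝ, 0 < x → x < 1 → HasDerivAt
      (fun x : ℝ => Real.binEntropy x - A * (x * (1 - x)))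
      (Real.log (1 - x) - Real.log x - A * (1 - 2 * x)) x := by
    intro x h0 h1
    have h := (Real.hasDerivAt_binEntropy h0.ne' h1.ne).sub
      (((hasDerivAt_id x).mul ((hasDerivAt_id x).const_sub 1)).const_mul A)
    refine h.congr_deriv ?_
    simp only [id]
    ring
  rcases le_total x a with h | h
  · have hm : MonotoneOn (fun x : ℝ => Real.binEntropy x - A * (x * (1 - x))) (Set.Icc 0 a) := by
      apply monotoneOn_of_deriv_nonneg (convex_Icc 0 a) hcont.continuousOn
      · intro z hz
        rw [interior_Icc] at hz
        exact (hder z hz.1 (by linarith [hz.2])).differentiableAt.differentiableWithinAt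
      · intro z hz
        rw [interior_Icc] at hz
        rw [(hder z hz.1 (by linarith [hz.2])).deriv]
        have := aux_ratio' hz.1 hz.2.le ha1.le
        rw [← hA] at this
        have h2 : (1 - 2 * a) * (A * (1 - 2 * z)) ≤
          (1 - 2 * a) * (Real.log (1 - z) - Real.log z) := by linarith
        linarith [le_of_mul_le_mul_left h2 (by linarith)]
    exact hm ⟨hx0, h⟩ ⟨ha.le, le_rfl⟩ h
  · have hm : AntitoneOn (fun x : ℝ => Real.binEntropy x - A * (x * (1 - x)))
        (Set.Icc a (1 / 2)) := by
      apply antitoneOn_of_deriv_nonpos (convex_Icc a (1 / 2)) hcont.continuousOn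
      · intro z hz
        rw [interior_Icc] at hz
        exact (hder z (by linarith [hz.1]) (by linarith [hz.2])).differentiableAt.differentiableWithinAt
      · intro z hz
        rw [interior_Icc] at hz
        rw [(hder z (by linarith [hz.1]) (by linarith [hz.2])).deriv]
        have := aux_ratio' ha hz.1.le hz.2.le
        rw [← hA] at this
        have h2 : (1 - 2 * a) * (Real.log (1 - z) - Real.log z) ≤
          (1 - 2 * a) * (A * (1 - 2 * z)) := by linarith
        linarith [le_of_mul_le_mul_left h2 (by linarith)]
    exact hm ⟨le_rfl, ha1.le⟩ ⟨h, hx1⟩ h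

theorem aux_bin {x a A : ℝ} (hx0 : 0 ≤ x) (hx1 : x ≤ 1) (ha : 0 < a) (ha1 : a < 1 / 2)
    (hA : A * (1 - 2 * a) = Real.log (1 - a) - Real.log a) :
    Real.binEntropy x - A * (x * (1 - x)) ≤ Real.binEntropy a - A * (a * (1 - a)) := by
  rcases le_total x (1 / 2) with h | h
  · exact aux_bin_half hx0 h ha ha1 hA
  · have := aux_bin_half (x := 1 - x) (by linarith) (by linarith) ha ha1 hA
    rw [Real.binEntropy_one_sub] at this
    linarith

theorem aux_scalar {n x : ℝ} (hn : 2 ≤ n) (hx0 : 0 ≤ x) (hx1 : x ≤ 1) :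
    (n + 1) / n * Real.log n * (x ^ 2 + n * ((1 - x) / n) ^ 2 - 1 / (n + 1)) ≤
      x * Real.log x + (1 - x) * Real.log ((1 - x) / n) + Real.log (n + 1) := by
  have hn0 : 0 < n := by linarith
  have hn1 : 0 < n - 1 := by linarith
  have hL : 0 ≤ Real.log n := Real.log_nonneg (by linarith)
  have e1 : x * Real.log x + (1 - x) * Real.log ((1 - x) / n)
      = - Real.binEntropy x - (1 - x) * Real.log n := by
    rw [Real.binEntropy, Real.log_inv, Real.log_inv]
    rcases hx1.eq_or_lt with h | h
    · subst h; simp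
    · rw [Real.log_div (by linarith) hn0.ne']; ring
  have hl1 : Real.log (1 - 1 / (n + 1)) = Real.log n - Real.log (n + 1) := by
    rw [← Real.log_div hn0.ne' (by linarith)]; congr 1; field_simp; ring
  have hl2 : Real.log (1 / (n + 1)) = - Real.log (n + 1) := by
    rw [one_div, Real.log_inv]
  have h := aux_bin (a := 1 / (n + 1)) (A := (n + 1) / (n - 1) * Real.log n) hx0 hx1 (by positivity)
    (by rw [div_lt_div_iff₀] <;> linarith)
    (by rw [hl1, hl2]; field_simp; ring)
  have e2 : Real.binEntropy (1 / (n + 1)) =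
      Real.log (n + 1) - n / (n + 1) * Real.log n := by
    rw [Real.binEntropy, Real.log_inv, Real.log_inv, hl1, hl2]
    field_simp; ring
  rw [e2] at h
  rw [e1]
  have e3 : (n + 1) / n * Real.log n * (x ^ 2 + n * ((1 - x) / n) ^ 2 - 1 / (n + 1))
      = Real.log n * (((n + 1) * x - 1) ^ 2 / n ^ 2) := by
    field_simp; ring
  have h4 : ((n + 1) * x - 1) ^ 2 / n ^ 2 ≤ ((n + 1) * x - 1) ^ 2 / ((n - 1) * (n + 1)) := by
    apply div_le_div_of_nonneg_left (sq_nonneg _) (by positivity)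
    nlinarith
  have h5 := mul_le_mul_of_nonneg_left h4 hL
  rw [e3]
  refine h5.trans ?_
  have e6 : Real.log n * (((n + 1) * x - 1) ^ 2 / ((n - 1) * (n + 1))) =
    -(1 - x) * Real.log n + n / (n + 1) * Real.log n - (n + 1) / (n - 1) * Real.log n * (x * (1 - x))
      + (n + 1) / (n - 1) * Real.log n * (1 / (n + 1) * (1 - 1 / (n + 1))) := by
    field_simp; ring
  rw [e6]
  linarith

theorem aux_row {k : ℕ} (hk : 3 ≤ k) (p : Fin k → ℝ) (hp : ∀ i, 0 ≤ p i) (hs : ∑ i, p i = 1) :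
    (k : ℝ) / ((k : ℝ) - 1) * Real.log ((k : ℝ) - 1) * (∑ i, p i ^ 2 - 1 / (k : ℝ)) ≤
      ∑ i, p i * Real.log (p i) + Real.log k := by
  have hkR : (3 : ℝ) ≤ k := by exact_mod_cast hk
  obtain ⟨n, hn⟩ : ∃ n : ℝ, n = (k : ℝ) - 1 := ⟨_, rfl⟩
  have hkn : (k : ℝ) = n + 1 := by linarith
  have hn2 : 2 ≤ n := by linarith
  have hn0 : 0 < n := by linarith
  haveI : Nonempty (Fin k) := ⟨⟨0, by omega⟩⟩
  obtain ⟨j, -, hj⟩ := Finset.exists_max_image (Finset.univ : Finset (Fin k)) p Finset.univ_nonempty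
  have hj : ∀ i, p i ≤ p j := fun i => hj i (Finset.mem_univ i)
  obtain ⟨x, hx⟩ : ∃ x, x = p j := ⟨_, rfl⟩
  obtain ⟨y, hy⟩ : ∃ y, y = (1 - x) / n := ⟨_, rfl⟩
  have hny : n * y = 1 - x := by rw [hy]; field_simp
  have hsplit : ∀ f : Fin k → ℝ, ∑ i, f i = f j + ∑ i ∈ Finset.univ.erase j, f i := fun f =>
    (Finset.add_sum_erase _ f (Finset.mem_univ j)).symm
  have hs' : ∑ i ∈ Finset.univ.erase j, p i = n * y := by
    have := hsplit p
    rw [hs] at this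
    linarith
  have hxk : 1 ≤ (n + 1) * x := by
    have : ∑ i, p i ≤ ∑ _i : Fin k, x := Finset.sum_le_sum (fun i _ => by rw [hx]; exact hj i)
    rw [hs] at this
    simpa [hkn] using this
  have hx0 : 0 ≤ x := hx ▸ hp j
  have hx1 : x ≤ 1 := by
    rw [hx, ← hs]
    exact Finset.single_le_sum (fun i _ => hp i) (Finset.mem_univ j)
  have hy0 : 0 ≤ y := by rw [hy]; apply div_nonneg <;> linarith
  have hy1 : (n + 1) * y ≤ 1 := by
    have : n * ((n + 1) * y) ≤ n * 1 := by
      have : n * ((n + 1) * y) = (n + 1) * (n * y) := by ring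
      rw [this, hny]; linarith
    exact le_of_mul_le_mul_left this hn0
  have hcard : ∑ _i ∈ (Finset.univ : Finset (Fin k)).erase j, (1 : ℝ) = n := by
    have := hsplit (fun _ => 1)
    simp only [Finset.sum_const, Finset.card_univ, Fintype.card_fin, nsmul_eq_mul, mul_one] at this ⊢
    linarith
  have hsum : ∑ i ∈ Finset.univ.erase j, ((n + 1) / n * Real.log n * (p i - y) ^ 2) ≤
      ∑ i ∈ Finset.univ.erase j, (p i * Real.log (p i) - p i * Real.log y - p i + y) := by
    apply Finset.sum_le_sum
    intro i hi
    have h1 : p i ≤ n * y := by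
      rw [← hs']
      exact Finset.single_le_sum (fun i _ => hp i) hi
    exact aux_tangent hn2 (hp i) hy0 hy1 h1 (by linarith [hj i])
  have hR : ∑ i ∈ Finset.univ.erase j, (p i * Real.log (p i) - p i * Real.log y - p i + y)
      = ∑ i ∈ Finset.univ.erase j, p i * Real.log (p i) - n * y * Real.log y := by
    have : ∀ i, p i * Real.log (p i) - p i * Real.log y - p i + y =
      p i * Real.log (p i) - p i * Real.log y - p i + 1 * y := fun i => by ring
    simp only [this, Finset.sum_add_distrib, Finset.sum_sub_distrib, ← Finset.sum_mul, hs', hcard]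
    ring
  have hLs : ∑ i ∈ Finset.univ.erase j, ((n + 1) / n * Real.log n * (p i - y) ^ 2)
      = (n + 1) / n * Real.log n * (∑ i ∈ Finset.univ.erase j, p i ^ 2 - n * y ^ 2) := by
    have : ∀ i, (p i - y) ^ 2 = p i ^ 2 - p i * (2 * y) + 1 * y ^ 2 := fun i => by ring
    rw [← Finset.mul_sum]
    simp only [this, Finset.sum_add_distrib, Finset.sum_sub_distrib, ← Finset.sum_mul, hs', hcard]
    ring
  have hsc := aux_scalar hn2 hx0 hx1
  rw [← hy, ← hny] at hsc
  rw [hR, hLs] at hsum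
  rw [hsplit (fun i => p i ^ 2), hsplit (fun i => p i * Real.log (p i)), ← hn, hkn]
  simp only [← hx]
  linarith

/-- The Achlioptas–Naor inequality: for doubly stochastic M and d < d_{k−1} = 2(k−1)log(k−1),
φ(M) ≤ log k + d log(1−1/k) − ((d_{k−1}−d)/(4(k−1)²)) ∑ (m_{pq} − 1/k)², where
φ(M) = −(1/k)∑ m_{pq} log m_{pq} + (d/2) log(1 − 2/k + (1/k²)∑ m_{pq}²).
(Real.log 0 = 0 in Mathlib, matching the convention 0·log 0 = 0.) -/
theorem stmt_11 (k : ℕ) (hk : 3 ≤ k) (d : ℝ) (hd : 0 < d)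
    (hdk : d < 2 * ((k : ℝ) - 1) * Real.log ((k : ℝ) - 1))
    (M : Matrix (Fin k) (Fin k) ℝ)
    (hMnn : ∀ p q, 0 ≤ M p q)
    (hMrow : ∀ p, ∑ q, M p q = 1) (hMcol : ∀ q, ∑ p, M p q = 1) :
    -(1 / (k : ℝ)) * (∑ p : Fin k, ∑ q : Fin k, M p q * Real.log (M p q)) +
        (d / 2) * Real.log (1 - 2 / (k : ℝ) + (1 / (k : ℝ) ^ 2) * ∑ p : Fin k, ∑ q : Fin k, (M p q) ^ 2) ≤
      Real.log k + d * Real.log (1 - 1 / (k : ℝ)) -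
        ((2 * ((k : ℝ) - 1) * Real.log ((k : ℝ) - 1) - d) / (4 * ((k : ℝ) - 1) ^ 2)) *
          ∑ p : Fin k, ∑ q : Fin k, (M p q - 1 / (k : ℝ)) ^ 2 := by
  have hkR : (3 : ℝ) ≤ k := by exact_mod_cast hk
  obtain ⟨n, hn⟩ : ∃ n : ℝ, n = (k : ℝ) - 1 := ⟨_, rfl⟩
  have hkn : (k : ℝ) = n + 1 := by linarith
  have hn2 : 2 ≤ n := by linarith
  have hn0 : 0 < n := by linarith
  obtain ⟨S, hS⟩ : ∃ S : ℝ, S = ∑ p : Fin k, (∑ q : Fin k, (M p q) ^ 2 - 1 / (k : ℝ)) := ⟨_, rfl⟩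
  have hS1 : ∑ p : Fin k, ∑ q : Fin k, (M p q) ^ 2 = S + 1 := by
    rw [hS, Finset.sum_sub_distrib]
    simp only [Finset.sum_const, Finset.card_univ, Fintype.card_fin, nsmul_eq_mul]
    field_simp
    ring
  have hS2 : ∑ p : Fin k, ∑ q : Fin k, (M p q - 1 / (k : ℝ)) ^ 2 = S := by
    rw [hS]
    refine Finset.sum_congr rfl (fun p _ => ?_)
    have : ∀ q, (M p q - 1 / (k : ℝ)) ^ 2 =
      M p q ^ 2 - M p q * (2 / (k : ℝ)) + (1 / (k : ℝ)) ^ 2 := fun q => by ring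
    simp only [this, Finset.sum_add_distrib, Finset.sum_sub_distrib, ← Finset.sum_mul, hMrow,
      Finset.sum_const, Finset.card_univ, Fintype.card_fin, nsmul_eq_mul]
    field_simp
    ring
  have hS0 : 0 ≤ S := by
    rw [← hS2]
    exact Finset.sum_nonneg fun p _ => Finset.sum_nonneg fun q _ => sq_nonneg _
  have hSn : S ≤ n := by
    have : ∑ p : Fin k, ∑ q : Fin k, (M p q) ^ 2 ≤ ∑ p : Fin k, ∑ q : Fin k, M p q := by
      refine Finset.sum_le_sum fun p _ => Finset.sum_le_sum fun q _ => ?_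
      have h1 : M p q ≤ 1 := by
        rw [← hMrow p]
        exact Finset.single_le_sum (fun i _ => hMnn p i) (Finset.mem_univ q)
      nlinarith [hMnn p q]
    simp only [hMrow, Finset.sum_const, Finset.card_univ, Fintype.card_fin, nsmul_eq_mul] at this
    linarith
  have hrows := Finset.sum_le_sum (s := (Finset.univ : Finset (Fin k)))
    (fun p _ => aux_row hk (M p) (hMnn p) (hMrow p))
  rw [← Finset.mul_sum, ← hS, Finset.sum_add_distrib] at hrows
  simp only [Finset.sum_const, Finset.card_univ, Fintype.card_fin, nsmul_eq_mul] at hrows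
  rw [hS1, hS2, ← hn]
  rw [← hn] at hrows hdk
  set T := ∑ p : Fin k, ∑ q : Fin k, M p q * Real.log (M p q)
  rw [hkn] at hrows ⊢
  set x := S / n ^ 2 with hx
  have hx0 : 0 ≤ x := by positivity
  have hx1 : x ≤ 1 := by
    rw [hx, div_le_one (by positivity)]; nlinarith
  have hlog : Real.log (1 - 2 / (n + 1) + 1 / (n + 1) ^ 2 * (S + 1)) =
      2 * Real.log (1 - 1 / (n + 1)) + Real.log (1 + x) := by
    have e : 1 - 2 / (n + 1) + 1 / (n + 1) ^ 2 * (S + 1) = (1 - 1 / (n + 1)) ^ 2 * (1 + x) := by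
      rw [hx]; field_simp; ring
    have e2 : 1 - 1 / (n + 1) = n / (n + 1) := by field_simp; ring
    have e3 : 0 < 1 - 1 / (n + 1) := by rw [e2]; positivity
    rw [e, Real.log_mul (by positivity) (by positivity), Real.log_pow]
    norm_num
  rw [hlog]
  have hup : Real.log (1 + x) ≤ x := by
    have := Real.log_le_sub_one_of_pos (x := 1 + x) (by linarith)
    linarith
  have hlo : x / 2 ≤ Real.log (1 + x) := by
    refine le_trans ?_ (Real.le_log_one_add_of_nonneg hx0)
    rw [div_le_div_iff₀ (by norm_num) (by linarith)]
    nlinarith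
  have hL : 0 ≤ Real.log n := Real.log_nonneg (by linarith)
  have hT : -(1 / (n + 1)) * T ≤ Real.log (n + 1) - n * Real.log n * x := by
    have h := mul_le_mul_of_nonneg_left hrows (show 0 ≤ 1 / (n + 1) by positivity)
    have e1 : 1 / (n + 1) * ((n + 1) / n * Real.log n * S) = n * Real.log n * x := by
      rw [hx]; field_simp
    have e2 : 1 / (n + 1) * (T + (n + 1) * Real.log (n + 1)) =
      1 / (n + 1) * T + Real.log (n + 1) := by field_simp
    rw [e1, e2] at h
    linarith
  have hfin : (2 * n * Real.log n - d) / (4 * n ^ 2) * S = (2 * n * Real.log n - d) / 4 * x := by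
    rw [hx]; field_simp
  rw [hfin]
  have g1 : n * Real.log n * Real.log (1 + x) ≤ n * Real.log n * x :=
    mul_le_mul_of_nonneg_left hup (by positivity)
  have g2 := mul_le_mul_of_nonneg_left hlo (show 0 ≤ (2 * n * Real.log n - d) / 2 by linarith)
  linarith
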